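/- arXiv:1908.03022 — 2 statements merged into one kernel-verified Lean document; each statement's English description precedes it below -/
import Mathlib

section
/- Let G be a connected finite simple graph on vertex set V whose diameter is at most D (i.e., every two vertices are at distance at most D in G). Then for every finite set F of edges of G and every pair of vertices u, v that lie in the same connected component of the graph G − F obtained from G by deleting the edges in F, the distance between u and v in G − F is at most (|F| + 1)·(2D + 1). -/
/-!
Call a vertex a local minimum of `f : V → ℕ` if no neighbor has a smaller value. For `f` the
distance from a root `r` in the connected graph `G`, the only local minimum is `r`. An edge allows
descent only from its endpoint with the larger value, so deleting the edges in `F` creates at most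
`|F|` further local minima. Descending along `f` in `G - F`, every vertex reaches one of these at
most `|F| + 1` local minima within `D` steps.

If the distance between `u` and `v` in `G - F` were at least `(|F| + 1) * (2 * D + 1)`, there would
be `|F| + 2` vertices whose distances from `u` are distinct multiples of `2 * D + 1`. Two of them
would be within `D` of the same local minimum, hence within `2 * D` of each other.
-/

section LocalMinima

variable {V α : Type*}

/-- The vertices at which `f` has a non-strict local minimum in `G`: a descent along `f` through
edges of `G` ends exactly at one of these. -/
def localMinima [LE α] (G : SimpleGraph V) (f : V → α) : Set V :=
  {x | ∀ y, G.Adj x y → f x ≤ f y}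

theorem notMem_localMinima_iff [LinearOrder α] {G : SimpleGraph V} {f : V → α} {x : V} :
    x ∉ localMinima G f ↔ ∃ y, G.Adj x y ∧ f y < f x := by
  simp [localMinima]

theorem exists_mem_localMinima_edist_le (G : SimpleGraph V) (f : V → ℕ) (x : V) :
    ∃ c ∈ localMinima G f, G.edist x c ≤ f x := by
  induction hn : f x using Nat.strong_induction_on generalizing x with
  | _ n ih =>
    by_cases hx : x ∈ localMinima G f
    · exact ⟨x, hx, by simp⟩
    · obtain ⟨y, hxy, hlt⟩ := notMem_localMinima_iff.1 hx
      obtain ⟨c, hc, hyc⟩ := ih (f y) (hn ▸ hlt) y rfl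
      refine ⟨c, hc, ?_⟩
      calc G.edist x c ≤ G.edist x y + G.edist y c := G.edist_triangle
        _ ≤ 1 + f y := add_le_add (SimpleGraph.edist_eq_one_iff_adj.2 hxy).le hyc
        _ ≤ n := by norm_cast; lia

theorem encard_localMinima_deleteEdges_sdiff_le [LinearOrder α] (G : SimpleGraph V) (f : V → α)
    (F : Set (Sym2 V)) :
    (localMinima (G.deleteEdges F) f \ localMinima G f).encard ≤ F.encard := by
  have exists_descent : ∀ x ∈ localMinima (G.deleteEdges F) f \ localMinima G f,
      ∃ y, s(x, y) ∈ F ∧ f y < f x := by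
    rintro x ⟨hxF, hxG⟩
    obtain ⟨y, hxy, hlt⟩ := notMem_localMinima_iff.1 hxG
    refine ⟨y, ?_, hlt⟩
    by_contra hyF
    exact hlt.not_ge (hxF y (SimpleGraph.deleteEdges_adj.2 ⟨hxy, hyF⟩))
  choose! p hpF hp using exists_descent
  refine Set.encard_le_encard_of_injOn (f := fun x ↦ s(x, p x)) hpF fun x hx y hy hxy ↦ ?_
  rcases Sym2.eq_iff.1 hxy with ⟨heq, -⟩ | ⟨hxpy, hpxy⟩
  · exact heq
  · exact absurd (hxpy ▸ hp y hy) (hpxy ▸ hp x hx).not_gt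

theorem localMinima_dist_eq_singleton {G : SimpleGraph V} (hG : G.Connected) (r : V) :
    localMinima G (G.dist r) = {r} := by
  refine Set.eq_singleton_iff_unique_mem.2 ⟨fun y _ ↦ by simp, fun x hx ↦ ?_⟩
  obtain ⟨w, hw⟩ := hG.exists_walk_length_eq_dist x r
  cases w with
  | nil => rfl
  | @cons _ y _ hxy q =>
    have hyq : G.dist r y ≤ q.length := SimpleGraph.dist_comm (G := G) ▸ SimpleGraph.dist_le q
    have hxy_le : G.dist r x ≤ G.dist r y := hx y hxy
    rw [SimpleGraph.Walk.length_cons, SimpleGraph.dist_comm] at hw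
    lia

theorem encard_localMinima_deleteEdges_dist_le {G : SimpleGraph V} (hG : G.Connected) (r : V)
    (F : Set (Sym2 V)) :
    (localMinima (G.deleteEdges F) (G.dist r)).encard ≤ F.encard + 1 :=
  calc (localMinima (G.deleteEdges F) (G.dist r)).encard
      ≤ (localMinima (G.deleteEdges F) (G.dist r) \ {r}).encard + ({r} : Set V).encard :=
        Set.encard_le_encard_sdiff_add_encard _ _
    _ ≤ F.encard + 1 := by
        rw [Set.encard_singleton, ← localMinima_dist_eq_singleton hG r]
        gcongr
        exact encard_localMinima_deleteEdges_sdiff_le G _ F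

end LocalMinima

section Covering

variable {V : Type*} {G : SimpleGraph V} {u v : V}

theorem exists_edist_eq_of_le_dist {n : ℕ} (h : G.Reachable u v) (hn : n ≤ G.dist u v) :
    ∃ x, G.edist u x = n := by
  obtain ⟨w, hw⟩ := h.exists_walk_length_eq_dist
  have htake : (w.take n).length = G.dist u (w.getVert n) :=
    SimpleGraph.length_eq_dist_of_subwalk hw (w.isSubwalk_take n)
  refine ⟨w.getVert n, ?_⟩
  rw [← (w.take n).reachable.coe_dist_eq_edist, ← htake, SimpleGraph.Walk.take_length, hw,
    min_eq_left hn]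

theorem dist_lt_mul_of_forall_exists_edist_le {S : Set V} {k R : ℕ} (hS : S.encard ≤ k)
    (hcover : ∀ x, ∃ c ∈ S, G.edist x c ≤ R) (h : G.Reachable u v) :
    G.dist u v < k * (2 * R + 1) := by
  by_contra! hle
  choose center hcenter_mem hcenter using hcover
  have exists_level : ∀ i ∈ Set.Iic k, ∃ x, G.edist u x = (i * (2 * R + 1) : ℕ) := fun i hi ↦
    exists_edist_eq_of_le_dist h ((Nat.mul_le_mul_right _ hi).trans hle)
  have : Nonempty V := ⟨u⟩
  choose! level hlevel using exists_level
  have center_injOn : Set.InjOn (fun i ↦ center (level i)) (Set.Iic k) := by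
    intro i hi j hj (heq : center (level i) = center (level j))
    by_contra hne
    wlog hij : i < j generalizing i j
    · exact this hj hi heq.symm (Ne.symm hne) (by lia)
    have hclose : G.edist (level i) (level j) ≤ R + R :=
      calc G.edist (level i) (level j)
          ≤ G.edist (level i) (center (level i)) + G.edist (center (level i)) (level j) :=
            G.edist_triangle
        _ = G.edist (level i) (center (level i)) + G.edist (level j) (center (level j)) := by
            rw [heq, G.edist_comm (u := center (level j))]
        _ ≤ R + R := add_le_add (hcenter _) (hcenter _)
    have hlevels : G.edist u (level j) ≤ G.edist u (level i) + (R + R) :=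
      G.edist_triangle.trans (by gcongr)
    rw [hlevel i hi, hlevel j hj] at hlevels
    norm_cast at hlevels
    have hgap : (i + 1) * (2 * R + 1) ≤ j * (2 * R + 1) := Nat.mul_le_mul_right _ hij
    linarith
  have hcard : (Set.Iic k).encard ≤ k :=
    (Set.encard_le_encard_of_injOn (fun i _ ↦ hcenter_mem (level i)) center_injOn).trans hS
  rw [← Finset.coe_Iic, Set.encard_coe_eq_coe_finsetCard, Nat.card_Iic] at hcard
  norm_cast at hcard
  lia

end Covering

theorem stmt_0_general {V : Type*} {G : SimpleGraph V} {D : ℕ} {r : V}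
    (hconn : G.Connected) (hr : ∀ x, G.dist r x ≤ D) (F : Finset (Sym2 V)) {u v : V}
    (h : (G.deleteEdges ↑F).Reachable u v) :
    (G.deleteEdges ↑F).dist u v < (F.card + 1) * (2 * D + 1) := by
  have hcard : (localMinima (G.deleteEdges ↑F) (G.dist r)).encard ≤ (F.card + 1 : ℕ) := by
    simpa using encard_localMinima_deleteEdges_dist_le hconn r (F : Set (Sym2 V))
  refine dist_lt_mul_of_forall_exists_edist_le hcard (fun x ↦ ?_) h
  obtain ⟨c, hc, hxc⟩ := exists_mem_localMinima_edist_le (G.deleteEdges ↑F) (G.dist r) x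
  exact ⟨c, hc, hxc.trans (by exact_mod_cast hr x)⟩

/-- In a connected graph of diameter at most `D`, after deleting a finite set
`F` of edges, any two vertices that remain in the same connected component are at distance
at most `(|F| + 1) * (2D + 1)` in the resulting graph. -/
theorem stmt_0 {V : Type} [Fintype V] (G : SimpleGraph V) (D : ℕ)
    (hconn : G.Connected) (hdiam : ∀ u v : V, G.dist u v ≤ D)
    (F : Finset (Sym2 V)) (hF : ↑F ⊆ G.edgeSet) (u v : V)
    (h : (G.deleteEdges ↑F).Reachable u v) :
    (G.deleteEdges ↑F).dist u v ≤ (F.card + 1) * (2 * D + 1) :=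
  (stmt_0_general hconn (hdiam u) F h).le
end

section
/- Let G be a connected finite simple graph with diameter at most D, let E′ be a finite set of edges of G, and fix a vertex s. Then the graph G − E′ obtained by deleting the edges of E′ is connected if and only if every vertex v of G satisfies dist_{G − E′}(s, v) ≤ (|E′| + 1)·(2D + 1); in particular, if G − E′ is connected then every vertex is reachable from s in G − E′ within (|E′| + 1)·(2D + 1) steps. -/
/-!
Let every vertex of `G` be within distance `D` of `c`. A shortest path to `c` traverses each of its
deleted edges from the endpoint farther from `c`, so following it from any vertex leads within `D`
steps of `G − E'` either to `c` or to the farther endpoint of a deleted edge. These at most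
`|E'| + 1` vertices thus dominate `G − E'` at distance `D`, and each of them is within `D` of at
most `2D + 1` vertices of a shortest path in `G − E'`, which bounds the length of that path.
-/

theorem exists_mem_sym2_forall_le {α β : Type*} [LinearOrder β] (f : α → β) (e : Sym2 α) :
    ∃ a ∈ e, ∀ b ∈ e, f b ≤ f a := by
  classical
  have he : e.toFinset.Nonempty := ⟨e.out.1, Sym2.mem_toFinset.mpr e.out_fst_mem⟩
  simpa only [Sym2.mem_toFinset] using e.toFinset.exists_max_image f he

section SimpleGraphDistance

variable {V : Type*} {G : SimpleGraph V} {u v c : V}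

theorem exists_adj_edist_eq {n : ℕ} (h : G.edist u c = (n + 1 : ℕ)) :
    ∃ p, G.Adj u p ∧ G.edist p c = n := by
  obtain ⟨w, hw⟩ := SimpleGraph.exists_walk_of_edist_eq_coe h
  cases w with
  | nil => simp at hw
  | @cons _ p _ hadj q =>
    have hq : G.edist p c ≤ n := by
      simpa only [Nat.succ.inj hw] using G.edist_le q
    refine ⟨p, hadj, hq.antisymm ?_⟩
    have htri : G.edist u c ≤ G.edist u p + G.edist p c := G.edist_triangle
    rw [h, SimpleGraph.edist_eq_one_iff_adj.mpr hadj, add_comm n, Nat.cast_add,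
      Nat.cast_one] at htri
    exact (ENat.add_le_add_iff_left ENat.one_ne_top).mp htri

theorem exists_card_le_forall_exists_edist_deleteEdges_le (G : SimpleGraph V)
    (E : Finset (Sym2 V)) (c : V) :
    ∃ T : Finset V, T.card ≤ E.card + 1 ∧
      ∀ u, ∃ r ∈ T, (G.deleteEdges ↑E).edist u r ≤ G.edist u c := by
  classical
  choose far far_mem le_far using exists_mem_sym2_forall_le (G.edist · c)
  refine ⟨insert c (E.image far), (Finset.card_insert_le _ _).trans
    (Nat.add_le_add_right Finset.card_image_le 1), fun u ↦ ?_⟩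
  cases hn : G.edist u c with
  | top => exact ⟨c, Finset.mem_insert_self _ _, le_top⟩
  | coe n =>
    induction n generalizing u with
    | zero =>
      obtain rfl : u = c := SimpleGraph.edist_eq_zero_iff.mp hn
      exact ⟨u, Finset.mem_insert_self _ _, by simp⟩
    | succ n ih =>
      obtain ⟨p, hadj, hp⟩ := exists_adj_edist_eq hn
      by_cases hE : s(u, p) ∈ E
      · have hfar : far s(u, p) = u := by
          refine (Sym2.mem_iff.mp (far_mem s(u, p))).resolve_right fun hfar ↦ ?_
          have hle : G.edist u c ≤ G.edist p c := hfar ▸ le_far s(u, p) u (Sym2.mem_mk_left u p)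
          rw [hn, hp, Nat.cast_le] at hle
          exact Nat.not_succ_le_self n hle
        exact ⟨u, Finset.mem_insert_of_mem (Finset.mem_image.mpr ⟨_, hE, hfar⟩), by simp⟩
      · obtain ⟨r, hr, hpr⟩ := ih p hp
        have hadj' : (G.deleteEdges ↑E).Adj u p := SimpleGraph.deleteEdges_adj.mpr ⟨hadj, hE⟩
        refine ⟨r, hr, ?_⟩
        calc (G.deleteEdges ↑E).edist u r
            ≤ (G.deleteEdges ↑E).edist u p + (G.deleteEdges ↑E).edist p r :=
              SimpleGraph.edist_triangle
          _ ≤ 1 + n := add_le_add (SimpleGraph.edist_eq_one_iff_adj.mpr hadj').le hpr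
          _ = (n + 1 : ℕ) := by rw [add_comm, Nat.cast_add, Nat.cast_one]

theorem dist_getVert_of_length_eq_dist {p : G.Walk u v} (hp : p.length = G.dist u v) {i : ℕ}
    (hi : i ≤ p.length) : G.dist u (p.getVert i) = i := by
  rw [← SimpleGraph.length_eq_dist_of_subwalk hp (p.isSubwalk_take i), p.take_length,
    min_eq_left hi]

theorem dist_lt_card_mul_of_forall_exists_edist_le {T : Finset V} {D : ℕ}
    (hT : ∀ x, ∃ r ∈ T, G.edist x r ≤ D) (huv : G.Reachable u v) :
    G.dist u v < T.card * (2 * D + 1) := by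
  obtain ⟨p, hp⟩ := huv.exists_walk_length_eq_dist
  have hcover : Finset.range (G.dist u v + 1) ⊆
      T.biUnion fun r ↦ Finset.Icc (G.dist u r - D) (G.dist u r + D) := by
    intro i hi
    obtain ⟨r, hr, hxr⟩ := hT (p.getVert i)
    have hi' : G.dist u (p.getVert i) = i :=
      dist_getVert_of_length_eq_dist hp (hp ▸ Finset.mem_range_succ_iff.mp hi)
    have hreach : G.Reachable (p.getVert i) r :=
      SimpleGraph.reachable_of_edist_ne_top (ne_top_of_le_ne_top (ENat.natCast_ne_top D) hxr)
    have hxr' : G.dist (p.getVert i) r ≤ D := by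
      rwa [← hreach.coe_dist_eq_edist, Nat.cast_le] at hxr
    have hur := hreach.dist_triangle_right u
    have hux := hreach.symm.dist_triangle_right u
    rw [G.dist_comm (u := r)] at hux
    exact Finset.mem_biUnion.mpr ⟨r, hr, Finset.mem_Icc.mpr (by omega)⟩
  calc G.dist u v + 1
      = (Finset.range (G.dist u v + 1)).card := (Finset.card_range _).symm
    _ ≤ (T.biUnion fun r ↦ Finset.Icc (G.dist u r - D) (G.dist u r + D)).card :=
      Finset.card_le_card hcover
    _ ≤ T.card * (2 * D + 1) :=
      Finset.card_biUnion_le_card_mul _ _ _ fun r _ ↦ by rw [Nat.card_Icc]; omega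

theorem dist_deleteEdges_lt_of_radius_le {D : ℕ} (hG : G.radius ≤ D) {E : Finset (Sym2 V)}
    (huv : (G.deleteEdges ↑E).Reachable u v) :
    (G.deleteEdges ↑E).dist u v < (E.card + 1) * (2 * D + 1) := by
  have : Nonempty V := ⟨u⟩
  obtain ⟨c, hc⟩ := G.exists_eccent_eq_radius
  obtain ⟨T, hTcard, hT⟩ := exists_card_le_forall_exists_edist_deleteEdges_le G E c
  have hxc (x : V) : G.edist x c ≤ D :=
    G.edist_comm.trans_le (SimpleGraph.edist_le_eccent.trans (hc.trans_le hG))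
  have hdom (x : V) : ∃ r ∈ T, (G.deleteEdges ↑E).edist x r ≤ D :=
    (hT x).imp fun _ hr ↦ ⟨hr.1, hr.2.trans (hxc x)⟩
  exact (dist_lt_card_mul_of_forall_exists_edist_le hdom huv).trans_le
    (Nat.mul_le_mul_right _ hTcard)

end SimpleGraphDistance

theorem stmt_2_general {V : Type*} (G : SimpleGraph V) (D : ℕ) (hG : G.radius ≤ D)
    (E : Finset (Sym2 V)) (s : V) :
    (G.deleteEdges ↑E).Connected ↔
      ∀ v : V, (G.deleteEdges ↑E).Reachable s v ∧
        (G.deleteEdges ↑E).dist s v ≤ (E.card + 1) * (2 * D + 1) :=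
  ⟨fun h v ↦ ⟨h s v, (dist_deleteEdges_lt_of_radius_le hG (h s v)).le⟩,
    fun h ↦ SimpleGraph.connected_iff_exists_forall_reachable _ |>.mpr ⟨s, fun v ↦ (h v).1⟩⟩

/-- For a connected graph `G` of diameter at most `D`, a finite edge set `E'`
and a fixed vertex `s`, the graph `G − E'` is connected iff every vertex `v` is reachable
from `s` in `G − E'` at distance at most `(|E'| + 1) * (2D + 1)`. -/
theorem stmt_2 {V : Type} [Fintype V] (G : SimpleGraph V) (D : ℕ)
    (hconn : G.Connected) (hdiam : ∀ u v : V, G.dist u v ≤ D)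
    (E' : Finset (Sym2 V)) (hE' : ↑E' ⊆ G.edgeSet) (s : V) :
    (G.deleteEdges ↑E').Connected ↔
      ∀ v : V, (G.deleteEdges ↑E').Reachable s v ∧
        (G.deleteEdges ↑E').dist s v ≤ (E'.card + 1) * (2 * D + 1) :=
  stmt_2_general G D (SimpleGraph.radius_le_eccent.trans ((G.eccent_le_iff s D).mpr fun v ↦
    (hconn s v).coe_dist_eq_edist ▸ Nat.cast_le.mpr (hdiam s v))) E' s
end
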